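/- If F is a Kuratowski partition of a Baire space X (a partition of X into meager sets such that the union of every subfamily has the Baire property) and U is a nonempty open subset of X, then {F ∩ U : F ∈ F, F ∩ U ≠ ∅} is a Kuratowski partition of the subspace U. -/

import Mathlib

def HasBaireProperty {X : Type*} [TopologicalSpace X] (A : Set X) : Prop :=
  ∃ V M : Set X, IsOpen V ∧ IsMeagre M ∧ A = symmDiff V M

def IsKuratowskiPartition {X : Type*} [TopologicalSpace X] (F : Set (Set X)) : Prop :=
  (∀ A ∈ F, IsMeagre A) ∧ ⋃₀ F = Set.univ ∧
  (F.Pairwise fun A B => A ∩ B = ∅) ∧ ∀ G ⊆ F, HasBaireProperty (⋃₀ G)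

def IsKuratowskiFamily {X ι : Type*} [TopologicalSpace X] (F : ι → Set X) : Prop :=
  (∀ α, IsMeagre (F α)) ∧ (⋃ α, F α) = Set.univ ∧
  (Pairwise fun a b => F a ∩ F b = ∅) ∧ ∀ A : Set ι, HasBaireProperty (⋃ α ∈ A, F α)

def KIdeal {X ι : Type*} [TopologicalSpace X] (F : ι → Set X) : Set (Set ι) :=
  {A | IsMeagre (⋃ α ∈ A, F α)}

/-- A Kuratowski partition of a Baire space restricts to a Kuratowski partition
of any nonempty open subspace. -/
theorem stmt_1 {X : Type*} [TopologicalSpace X] [BaireSpace X]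
    (F : Set (Set X)) (hF : IsKuratowskiPartition F)
    (U : Set X) (hU : IsOpen U) (hne : U.Nonempty) :
    IsKuratowskiPartition {S : Set U | S ≠ ∅ ∧ ∃ A ∈ F, S = Subtype.val ⁻¹' A} := by
  obtain ⟨hm, hc, hd, hb⟩ := hF
  have key : ∀ M : Set X, IsMeagre M → IsMeagre ((Subtype.val : U → X) ⁻¹' M) := fun M hM =>
    IsMeagre.preimage_of_isOpenMap continuous_subtype_val hU.isOpenMap_subtype_val hM
  refine ⟨?_, ?_, ?_, ?_⟩
  · rintro S ⟨-, A, hA, rfl⟩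
    exact key A (hm A hA)
  · apply Set.eq_univ_of_forall
    intro x
    have hx : (x : X) ∈ ⋃₀ F := by rw [hc]; trivial
    obtain ⟨A, hA, hxA⟩ := hx
    exact ⟨Subtype.val ⁻¹' A, ⟨Set.Nonempty.ne_empty ⟨x, hxA⟩, A, hA, rfl⟩, hxA⟩
  · rintro S ⟨-, A, hA, rfl⟩ T ⟨-, B, hB, rfl⟩ hne'
    have hAB : A ≠ B := fun h => hne' (by rw [h])
    have h := hd hA hB hAB
    simp only at h ⊢
    rw [← Set.preimage_inter, h, Set.preimage_empty]
  · intro G hG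
    obtain ⟨V, M, hV, hM, h⟩ := hb {A | A ∈ F ∧ (Subtype.val : U → X) ⁻¹' A ∈ G} (fun A h => h.1)
    refine ⟨Subtype.val ⁻¹' V, Subtype.val ⁻¹' M, hV.preimage continuous_subtype_val, key M hM, ?_⟩
    have h2 : ⋃₀ G = (Subtype.val : U → X) ⁻¹' (symmDiff V M) := by
      rw [← h]
      ext x
      constructor
      · rintro ⟨S, hS, hx⟩
        obtain ⟨-, A, hA, rfl⟩ := hG hS
        exact ⟨A, ⟨hA, hS⟩, hx⟩
      · rintro ⟨A, ⟨hA, hS⟩, hx⟩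
        exact ⟨_, hS, hx⟩
    rw [h2]
    rfl
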